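/- Fix n ≥ 2 and j ∈ {2,…,n}. For every degree vector d ∈ Z_{≥0}^n with ∑_i d_i = C(n,2)+1, the coefficient ∑_{π∈S_n} ( ∑_{k=j}^n E^π(d−e_k) − ∑_{k=1}^{j−1} E^π(d−e_k)·∑_{i=1}^k 1[π(i)>π(j)] ) is nonnegative, where E^π(c) denotes the coefficient of x^c in F^π(x) = ∏_{i=1}^n (∑_{h=i}^n x_h)^{n−π(i)} (taken as 0 if some c_i < 0). -/

import Mathlib

open Finset

/-- `F^π(x) = ∏_i (∑_{h≥i} x_h)^{n−π(i)}` over ℕ (positions 0-indexed). -/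
noncomputable def Fpoly (n : ℕ) (π : Equiv.Perm (Fin n)) : MvPolynomial (Fin n) ℕ :=
  ∏ i, (∑ h ∈ Finset.Ici i, MvPolynomial.X h) ^ (n - 1 - (π i : ℕ))

/-- `E^π(c)`: coefficient of `x^c` in `F^π`, extended by `0` when some `c_i < 0`. -/
noncomputable def Ecoef (n : ℕ) (π : Equiv.Perm (Fin n)) (c : Fin n → ℤ) : ℕ :=
  if ∀ i, 0 ≤ c i then
    MvPolynomial.coeff (Finsupp.equivFunOnFinite.symm fun i => (c i).toNat) (Fpoly n π)
  else 0

/-! Put `y i = ∑ h ≥ i, x_h`, so that `F^π` is the monomial `y^(n - 1 - π)`. Since `y i - y j` is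
the sum of the `x_k` with `i ≤ k < j`, the number in question is a coefficient of
`∑ π, F^π * ((m π + 1) * y j - ∑ y i)`, where `i` runs over the `m π` positions `i ≤ j` with
`π i > π j`. If `m π > 0`, let `q ≤ j` be the position whose value is the next one above `π j`. The
permutation `π' = π * swap j q` has `m π' + 1 = m π`, and `π` can be recovered from `π'`; hence it
suffices to compare `∑ F^(π * swap j q) * y j` with `∑ F^π * y i` over all triples `(q, i, π)`.
Single terms of the difference may have negative coefficients, but the sum of the terms of
`(q, i, π)` and `(i, q, π * swap i q)` has not: this is an inequality of Muirhead type between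
monomials in `y j`, `y i` and `y q`, valid in every partially ordered commutative ring, in
particular for the coefficientwise order, where `y j` is below the comparable elements `y i` and
`y q`. -/

section OrderedAlgebra

theorem sum_sum_nonneg_of_add_swap_nonneg {ι M : Type*} [AddCommMonoid M] [PartialOrder M]
    [IsOrderedAddMonoid M] (s : Finset ι) (f : ι → ι → M) (hdiag : ∀ i ∈ s, 0 ≤ f i i)
    (hswap : ∀ i ∈ s, ∀ j ∈ s, i ≠ j → 0 ≤ f i j + f j i) :
    0 ≤ ∑ i ∈ s, ∑ j ∈ s, f i j := by
  classical
  induction s using Finset.induction_on with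
  | empty => simp
  | insert a s ha ih =>
    have hrow : 0 ≤ ∑ i ∈ s, (f a i + f i a) := sum_nonneg fun i hi =>
      hswap a (mem_insert_self a s) i (mem_insert_of_mem hi) (ne_of_mem_of_not_mem hi ha).symm
    have hrest : 0 ≤ ∑ i ∈ s, ∑ j ∈ s, f i j :=
      ih (fun i hi => hdiag i (mem_insert_of_mem hi)) fun i hi j hj =>
        hswap i (mem_insert_of_mem hi) j (mem_insert_of_mem hj)
    calc
      0 ≤ f a a + ∑ i ∈ s, (f a i + f i a) + ∑ i ∈ s, ∑ j ∈ s, f i j :=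
        add_nonneg (add_nonneg (hdiag a (mem_insert_self a s)) hrow) hrest
      _ = ∑ i ∈ insert a s, ∑ j ∈ insert a s, f i j := by
        simp only [sum_insert ha, sum_add_distrib]
        abel

variable {R : Type*} [CommRing R] [PartialOrder R] [IsOrderedRing R] {u v w : R} {m n k : ℕ}

theorem pow_mul_pow_le_pow_mul_pow (hw : 0 ≤ w) (hwu : w ≤ u) (hmn : m ≤ n) :
    u ^ m * w ^ n ≤ u ^ n * w ^ m := by
  obtain ⟨k, rfl⟩ := Nat.exists_eq_add_of_le hmn
  have hu : 0 ≤ u := hw.trans hwu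
  calc
    u ^ m * w ^ (m + k) = u ^ m * w ^ m * w ^ k := by ring
    _ ≤ u ^ m * w ^ m * u ^ k := by gcongr
    _ = u ^ (m + k) * w ^ m := by ring

theorem pow_succ_mul_pow_add_le (hu : 0 ≤ u) (hv : 0 ≤ v) (huv : u ≤ v ∨ v ≤ u) (hmn : m ≤ n) :
    u ^ (m + 1) * v ^ n + u ^ n * v ^ (m + 1) ≤ u ^ m * v ^ (n + 1) + u ^ (n + 1) * v ^ m := by
  wlog h : u ≤ v generalizing u v
  · calc
      _ = v ^ (m + 1) * u ^ n + v ^ n * u ^ (m + 1) := by ring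
      _ ≤ v ^ m * u ^ (n + 1) + v ^ (n + 1) * u ^ m :=
        this hv hu huv.symm (huv.resolve_left h)
      _ = u ^ m * v ^ (n + 1) + u ^ (n + 1) * v ^ m := by ring
  obtain ⟨k, rfl⟩ := Nat.exists_eq_add_of_le hmn
  calc
    _ = u ^ m * v ^ m * (u * v ^ k + v * u ^ k) := by ring
    _ ≤ u ^ m * v ^ m * (u * u ^ k + v * v ^ k) := by
      gcongr ?_ * ?_
      exact mul_add_mul_le_mul_add_mul h (pow_le_pow_left₀ hu h k)
    _ = _ := by ring

theorem mul_pow_succ_mul_pow_add_le (hw : 0 ≤ w) (hwu : w ≤ u) (hwv : w ≤ v)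
    (huv : u ≤ v ∨ v ≤ u) (hkm : k < m) (hmn : m < n) :
    w ^ n * (u ^ (k + 1) * v ^ m + u ^ m * v ^ (k + 1)) ≤
      w ^ (m + 1) * (u ^ k * v ^ n + u ^ n * v ^ k) := by
  obtain ⟨p, rfl⟩ := Nat.exists_eq_add_of_lt hmn
  have hu : 0 ≤ u := hw.trans hwu
  have hv : 0 ≤ v := hw.trans hwv
  calc
    _ = w ^ (m + 1) * (u ^ (k + 1) * (v ^ m * w ^ p) + u ^ m * w ^ p * v ^ (k + 1)) := by ring
    _ ≤ w ^ (m + 1) * (u ^ (k + 1) * (v ^ m * v ^ p) + u ^ m * u ^ p * v ^ (k + 1)) := by gcongr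
    _ = w ^ (m + 1) * (u ^ (k + 1) * v ^ (m + p) + u ^ (m + p) * v ^ (k + 1)) := by ring
    _ ≤ w ^ (m + 1) * (u ^ k * v ^ (m + p + 1) + u ^ (m + p + 1) * v ^ k) := by
      gcongr w ^ (m + 1) * ?_
      exact pow_succ_mul_pow_add_le hu hv huv (by lia)

end OrderedAlgebra

theorem swap_mem_iff {ι : Type*} [DecidableEq ι] {s : Finset ι} {p q : ι} (hp : p ∈ s)
    (hq : q ∈ s) (l : ι) : Equiv.swap p q l ∈ s ↔ l ∈ s := by
  rw [Equiv.swap_apply_def]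
  split_ifs <;> simp_all

/-- `IsSuccOn s f p q` says that `f q` is the immediate successor of `f p` among the values of `f`
at the positions in `s`. -/
structure IsSuccOn {ι α : Type*} [LinearOrder α] (s : Finset ι) (f : ι → α) (p q : ι) : Prop where
  left_mem : p ∈ s
  right_mem : q ∈ s
  lt : f p < f q
  le_of_lt : ∀ l ∈ s, f p < f l → f q ≤ f l

namespace IsSuccOn

variable {ι α : Type*} [LinearOrder α] {s : Finset ι} {f : ι → α} {p p' q q' : ι}

instance [DecidableEq ι] (s : Finset ι) (f : ι → α) (p q : ι) : Decidable (IsSuccOn s f p q) :=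
  decidable_of_iff (p ∈ s ∧ q ∈ s ∧ f p < f q ∧ ∀ l ∈ s, f p < f l → f q ≤ f l)
    ⟨fun ⟨hp, hq, hlt, hle⟩ => ⟨hp, hq, hlt, hle⟩,
      fun h => ⟨h.left_mem, h.right_mem, h.lt, h.le_of_lt⟩⟩

theorem lt_iff_le (h : IsSuccOn s f p q) {l : ι} (hl : l ∈ s) : f p < f l ↔ f q ≤ f l :=
  ⟨h.le_of_lt l hl, h.lt.trans_le⟩

theorem right_unique (hf : f.Injective) (h : IsSuccOn s f p q) (h' : IsSuccOn s f p q') :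
    q = q' :=
  hf <| ((h.lt_iff_le h'.right_mem).1 h'.lt).antisymm ((h'.lt_iff_le h.right_mem).1 h.lt)

theorem left_unique (hf : f.Injective) (h : IsSuccOn s f p q) (h' : IsSuccOn s f p' q) :
    p = p' := by
  refine hf (le_antisymm (not_lt.1 fun hlt => ?_) (not_lt.1 fun hlt => ?_))
  · exact h.lt.not_ge ((h'.lt_iff_le h.left_mem).1 hlt)
  · exact h'.lt.not_ge ((h.lt_iff_le h'.left_mem).1 hlt)

theorem exists_right {l : ι} (hp : p ∈ s) (hl : l ∈ s) (hpl : f p < f l) :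
    ∃ q, IsSuccOn s f p q := by
  obtain ⟨q, hq, hmin⟩ := exists_min_image {l ∈ s | f p < f l} f ⟨l, mem_filter.2 ⟨hl, hpl⟩⟩
  rw [mem_filter] at hq
  exact ⟨q, hp, hq.1, hq.2, fun l hl hpl => hmin l (mem_filter.2 ⟨hl, hpl⟩)⟩

theorem comp_equiv_iff {σ : Equiv.Perm ι} (hσ : ∀ l, σ l ∈ s ↔ l ∈ s) :
    IsSuccOn s (f ∘ σ) p q ↔ IsSuccOn s f (σ p) (σ q) := by
  have hle : (∀ l ∈ s, f (σ p) < f (σ l) → f (σ q) ≤ f (σ l)) ↔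
      ∀ l ∈ s, f (σ p) < f l → f (σ q) ≤ f l :=
    σ.forall_congr fun l => by rw [hσ]
  exact ⟨fun h => ⟨(hσ p).2 h.left_mem, (hσ q).2 h.right_mem, h.lt, hle.1 h.le_of_lt⟩,
    fun h => ⟨(hσ p).1 h.left_mem, (hσ q).1 h.right_mem, h.lt, hle.2 h.le_of_lt⟩⟩

theorem card_filter_lt (hf : f.Injective) (h : IsSuccOn s f p q) :
    #{l ∈ s | f p < f l} = #{l ∈ s | f q < f l} + 1 := by
  classical
  have hinsert : {l ∈ s | f p < f l} = insert q {l ∈ s | f q < f l} := by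
    ext l
    simp only [mem_filter, mem_insert]
    constructor
    · rintro ⟨hl, hpl⟩
      rcases ((h.lt_iff_le hl).1 hpl).eq_or_lt with heq | hlt
      · exact .inl (hf heq).symm
      · exact .inr ⟨hl, hlt⟩
    · rintro (rfl | ⟨hl, hql⟩)
      · exact ⟨h.right_mem, h.lt⟩
      · exact ⟨hl, h.lt.trans hql⟩
  rw [hinsert, card_insert_of_notMem (by simp)]

end IsSuccOn

open Equiv (Perm swap)

section PermMonomial

variable {ι R : Type*} [Fintype ι]

/-- The monomial `∏ l, y l ^ e (π l)`, whose exponent vector is `e` rearranged by `π`; for tail sums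
`y` and `e v = n - 1 - v` it is `F^π`. -/
def permMonomial [CommMonoid R] (y : ι → R) (e : ι → ℕ) (π : Perm ι) : R :=
  ∏ l, y l ^ e (π l)

theorem permMonomial_mul_of_forall_notMem [DecidableEq ι] [CommMonoid R] (y : ι → R)
    (e : ι → ℕ) (π : Perm ι) (t : Finset ι) {σ : Perm ι} (hσ : ∀ l ∉ t, σ l = l) :
    permMonomial y e (π * σ) = (∏ l ∈ t, y l ^ e (π (σ l))) * ∏ l ∈ tᶜ, y l ^ e (π l) := by
  rw [permMonomial, ← prod_mul_prod_compl t]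
  congr 1
  refine prod_congr rfl fun l hl => ?_
  rw [Equiv.Perm.mul_apply, hσ l (mem_compl.1 hl)]

variable [CommRing R] [PartialOrder R] [IsOrderedRing R] {y : ι → R} {e : ι → ℕ} {i j q : ι}

theorem permMonomial_nonneg (hy : ∀ l, 0 ≤ y l) (π : Perm ι) : 0 ≤ permMonomial y e π :=
  prod_nonneg fun l _ => pow_nonneg (hy l) _

variable [DecidableEq ι]

theorem permMonomial_mul_le (hy : ∀ l, 0 ≤ y l) {π : Perm ι}
    (hjq : y j ≤ y q) (hπ : e (π q) < e (π j)) :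
    permMonomial y e π * y q ≤ permMonomial y e (π * swap j q) * y j := by
  have hne : j ≠ q := ne_of_apply_ne (e ∘ π) hπ.ne'
  have hsplit := fun σ => permMonomial_mul_of_forall_notMem y e π {j, q} (σ := σ)
  have h₁ := hsplit 1 (by simp)
  have h₂ := hsplit (swap j q) fun l hl => by
    simp only [mem_insert, mem_singleton, not_or] at hl
    exact Equiv.swap_apply_of_ne_of_ne hl.1 hl.2
  simp only [mul_one, prod_pair hne, Equiv.Perm.one_apply, Equiv.swap_apply_left,
    Equiv.swap_apply_right] at h₁ h₂
  rw [h₁, h₂]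
  set c := ∏ l ∈ ({j, q} : Finset ι)ᶜ, y l ^ e (π l)
  have hc : 0 ≤ c := prod_nonneg fun l _ => pow_nonneg (hy l) _
  calc
    _ = y q ^ (e (π q) + 1) * y j ^ e (π j) * c := by ring
    _ ≤ y q ^ e (π j) * y j ^ (e (π q) + 1) * c := by
      gcongr ?_ * c
      exact pow_mul_pow_le_pow_mul_pow (hy j) hjq hπ
    _ = _ := by ring

theorem permMonomial_mul_add_le (hy : ∀ l, 0 ≤ y l) {π : Perm ι}
    (hji : y j ≤ y i) (hjq : y j ≤ y q) (hiq : y i ≤ y q ∨ y q ≤ y i)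
    (hπjq : e (π q) < e (π j)) (hπqi : e (π i) < e (π q)) :
    permMonomial y e π * y i + permMonomial y e (π * swap i q) * y q ≤
      permMonomial y e (π * swap j q) * y j +
        permMonomial y e (π * swap i q * swap j i) * y j := by
  have hne_jq : j ≠ q := ne_of_apply_ne (e ∘ π) hπjq.ne'
  have hne_iq : i ≠ q := ne_of_apply_ne (e ∘ π) hπqi.ne
  have hne_ji : j ≠ i := ne_of_apply_ne (e ∘ π) (hπqi.trans hπjq).ne'
  set c := ∏ l ∈ ({i, j, q} : Finset ι)ᶜ, y l ^ e (π l)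
  have hc : 0 ≤ c := prod_nonneg fun l _ => pow_nonneg (hy l) _
  have hsplit (σ : Perm ι) (hσ : ∀ l, l ≠ i → l ≠ j → l ≠ q → σ l = l) :
      permMonomial y e (π * σ) =
        y i ^ e (π (σ i)) * (y j ^ e (π (σ j)) * y q ^ e (π (σ q))) * c := by
    rw [permMonomial_mul_of_forall_notMem y e π {i, j, q} (by simpa using hσ),
      prod_insert (by simp [hne_ji.symm, hne_iq]), prod_pair hne_jq]
  have h₁ := hsplit 1 (by simp)
  have h₂ := hsplit (swap i q) fun l hi _ hq => Equiv.swap_apply_of_ne_of_ne hi hq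
  have h₃ := hsplit (swap j q) fun l _ hj hq => Equiv.swap_apply_of_ne_of_ne hj hq
  have h₄ := hsplit (swap i q * swap j i) fun l hi hj hq => by
    rw [Equiv.Perm.mul_apply, Equiv.swap_apply_of_ne_of_ne hj hi,
      Equiv.swap_apply_of_ne_of_ne hi hq]
  simp only [mul_one, ← mul_assoc, Equiv.Perm.one_apply, Equiv.Perm.mul_apply,
    Equiv.swap_apply_left, Equiv.swap_apply_right,
    Equiv.swap_apply_of_ne_of_ne hne_ji hne_jq, Equiv.swap_apply_of_ne_of_ne hne_ji.symm hne_iq,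
    Equiv.swap_apply_of_ne_of_ne hne_jq.symm hne_iq.symm] at h₁ h₂ h₃ h₄
  rw [h₁, h₂, h₃, h₄]
  calc
    _ = y j ^ e (π j) * (y i ^ (e (π i) + 1) * y q ^ e (π q) +
          y i ^ e (π q) * y q ^ (e (π i) + 1)) * c := by ring
    _ ≤ y j ^ (e (π q) + 1) * (y i ^ e (π i) * y q ^ e (π j) +
          y i ^ e (π j) * y q ^ e (π i)) * c := by
      gcongr ?_ * c
      exact mul_pow_succ_mul_pow_add_le (hy j) hji hjq hiq hπqi hπjq
    _ = _ := by ring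

end PermMonomial

section SuccessorSwap

variable {ι : Type*} [LinearOrder ι] {s : Finset ι} {i j q : ι}

theorem isSuccOn_mul_swap_iff (hi : i ∈ s) (hq : q ∈ s) (π : Perm ι) (p r : ι) :
    IsSuccOn s (π * swap i q) p r ↔ IsSuccOn s π (swap i q p) (swap i q r) := by
  rw [Equiv.Perm.coe_mul]
  exact IsSuccOn.comp_equiv_iff (swap_mem_iff hi hq)

theorem card_filter_lt_mul_swap {π : Perm ι} (h : IsSuccOn s π q j) :
    #{i ∈ s | (π * swap j q) j < (π * swap j q) i} = #{i ∈ s | π j < π i} + 1 := by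
  rw [← h.card_filter_lt π.injective]
  refine card_equiv (swap j q) fun i => ?_
  simp [swap_mem_iff h.right_mem h.left_mem]

theorem isSuccOn_mul_swap_and_lt_iff (hi : i ∈ s) (hq : q ∈ s) (π : Perm ι) :
    IsSuccOn s (π * swap i q) j i ∧ (π * swap i q) j < (π * swap i q) q ↔
      IsSuccOn s π j q ∧ π j < π i := by
  have hirrefl (p : ι) : ¬IsSuccOn s π p p := fun h => h.lt.false
  rw [isSuccOn_mul_swap_iff hi hq]
  rcases eq_or_ne j i with rfl | hji
  · simp [hirrefl]
  rcases eq_or_ne j q with rfl | hjq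
  · simp [hirrefl]
  · simp [Equiv.swap_apply_of_ne_of_ne hji hjq]

variable [Fintype ι]

theorem sum_sum_isSuccOn_left_le {M : Type*} [AddCommMonoid M] [PartialOrder M]
    [IsOrderedAddMonoid M] (s : Finset ι) (j : ι) {g : Perm ι → M} (hg : ∀ π, 0 ≤ g π) :
    ∑ q ∈ s, ∑ π ∈ {π : Perm ι | IsSuccOn s π q j}, g π ≤ ∑ π, g π := by
  rw [← sum_biUnion]
  · exact sum_le_univ_sum_of_nonneg hg
  · intro q _ q' _ hne
    refine disjoint_filter.2 fun π _ h h' => hne ?_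
    exact h.left_unique π.injective h'

theorem sum_sum_isSuccOn_right {M : Type*} [AddCommMonoid M] (hj : j ∈ s) {g : Perm ι → M}
    (hg : ∀ π, {i ∈ s | π j < π i} = ∅ → g π = 0) :
    ∑ q ∈ s, ∑ π ∈ {π : Perm ι | IsSuccOn s π j q}, g π = ∑ π, g π := by
  rw [← sum_biUnion]
  · refine sum_subset (subset_univ _) fun π _ hπ => hg π (filter_eq_empty_iff.2 fun i hi hlt => ?_)
    obtain ⟨q, hq⟩ := IsSuccOn.exists_right hj hi hlt
    exact hπ (mem_biUnion.2 ⟨q, hq.right_mem, mem_filter.2 ⟨mem_univ π, hq⟩⟩)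
  · intro q _ q' _ hne
    refine disjoint_filter.2 fun π _ h h' => hne ?_
    exact h.right_unique π.injective h'

variable {R : Type*} [CommRing R] [PartialOrder R] [IsOrderedRing R] {y : ι → R} {e : ι → ℕ}

theorem sum_isSuccOn_add_swap_nonneg (hy : ∀ l, 0 ≤ y l) (he : StrictAnti e)
    (hi : i ∈ s) (hq : q ∈ s) (hne : i ≠ q) (hji : y j ≤ y i) (hjq : y j ≤ y q)
    (hiq : y i ≤ y q ∨ y q ≤ y i) :
    0 ≤ (∑ π ∈ {π : Perm ι | IsSuccOn s π j q ∧ π j < π i},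
          (permMonomial y e (π * swap j q) * y j - permMonomial y e π * y i)) +
        ∑ π ∈ {π : Perm ι | IsSuccOn s π j i ∧ π j < π q},
          (permMonomial y e (π * swap j i) * y j - permMonomial y e π * y q) := by
  have hreindex : ∑ π ∈ {π : Perm ι | IsSuccOn s π j i ∧ π j < π q},
        (permMonomial y e (π * swap j i) * y j - permMonomial y e π * y q) =
      ∑ π ∈ {π : Perm ι | IsSuccOn s π j q ∧ π j < π i},
        (permMonomial y e (π * swap i q * swap j i) * y j -
          permMonomial y e (π * swap i q) * y q) := by
    refine (sum_equiv (Equiv.mulRight (swap i q)) (fun π => ?_) fun π _ => rfl).symm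
    simp only [mem_filter, mem_univ, true_and, Equiv.coe_mulRight]
    exact (isSuccOn_mul_swap_and_lt_iff hi hq π).symm
  rw [hreindex, ← sum_add_distrib]
  refine sum_nonneg fun π hπ => ?_
  obtain ⟨-, hsucc, hlt⟩ := mem_filter.1 hπ
  have hπqi : π q < π i :=
    ((hsucc.lt_iff_le hi).1 hlt).lt_of_ne (π.injective.ne hne.symm)
  have := permMonomial_mul_add_le hy hji hjq hiq (he hsucc.lt) (he hπqi)
  linear_combination this

theorem sum_sum_isSuccOn_nonneg (hy : ∀ l, 0 ≤ y l) (he : StrictAnti e)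
    (hmin : ∀ i ∈ s, y j ≤ y i) (hchain : ∀ i ∈ s, ∀ q ∈ s, y i ≤ y q ∨ y q ≤ y i) :
    0 ≤ ∑ q ∈ s, ∑ i ∈ s, ∑ π ∈ {π : Perm ι | IsSuccOn s π j q ∧ π j < π i},
      (permMonomial y e (π * swap j q) * y j - permMonomial y e π * y i) := by
  refine sum_sum_nonneg_of_add_swap_nonneg s _ (fun q hq => ?_) fun q hq i hi hne => ?_
  · refine sum_nonneg fun π hπ => sub_nonneg.2 ?_
    exact permMonomial_mul_le hy (hmin q hq) (he (mem_filter.1 hπ).2.2)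
  · exact sum_isSuccOn_add_swap_nonneg hy he hi hq hne.symm (hmin i hi) (hmin q hq)
      (hchain i hi q hq)

theorem sum_permMonomial_mul_sum_filter_le (hy : ∀ l, 0 ≤ y l) (he : StrictAnti e) (hj : j ∈ s)
    (hmin : ∀ i ∈ s, y j ≤ y i) (hchain : ∀ i ∈ s, ∀ q ∈ s, y i ≤ y q ∨ y q ≤ y i) :
    ∑ π : Perm ι, permMonomial y e π * ∑ i ∈ s with π j < π i, y i ≤
      ∑ π : Perm ι, permMonomial y e π * ((#{i ∈ s | π j < π i} + 1 : ℕ) * y j) := by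
  calc
    _ = ∑ q ∈ s, ∑ π ∈ {π : Perm ι | IsSuccOn s π j q},
          ∑ i ∈ s with π j < π i, permMonomial y e π * y i := by
      simp only [mul_sum]
      exact (sum_sum_isSuccOn_right hj fun π hπ => by rw [hπ, sum_empty]).symm
    _ ≤ ∑ q ∈ s, ∑ π ∈ {π : Perm ι | IsSuccOn s π j q},
          ∑ i ∈ s with π j < π i, permMonomial y e (π * swap j q) * y j := by
      rw [← sub_nonneg]
      simp only [← sum_sub_distrib]
      refine (sum_sum_isSuccOn_nonneg hy he hmin hchain).trans_eq (sum_congr rfl fun q _ => ?_)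
      exact sum_comm' fun i π => by
        simp only [mem_filter, mem_univ, true_and]
        tauto
    _ = ∑ q ∈ s, ∑ π ∈ {π : Perm ι | IsSuccOn s π q j},
          permMonomial y e π * ((#{i ∈ s | π j < π i} + 1 : ℕ) * y j) := by
      refine sum_congr rfl fun q hq => (sum_equiv (Equiv.mulRight (swap j q)) ?_ ?_).symm
      · intro π
        simp only [mem_filter, mem_univ, true_and, Equiv.coe_mulRight,
          isSuccOn_mul_swap_iff hj hq, Equiv.swap_apply_left, Equiv.swap_apply_right]
      · intro π hπ
        rw [Equiv.coe_mulRight, sum_const, card_filter_lt_mul_swap (mem_filter.1 hπ).2,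
          Equiv.mul_swap_mul_self, nsmul_eq_mul]
        ring
    _ ≤ _ := sum_sum_isSuccOn_left_le s j fun π =>
      mul_nonneg (permMonomial_nonneg hy π) (mul_nonneg (Nat.cast_nonneg _) (hy j))

end SuccessorSwap

section TailSum

variable {ι S : Type*} [LinearOrder ι] [LocallyFiniteOrderTop ι]

/-- The tail sum `∑ h ≥ i, x_h`; the polynomials `F^π` are products of powers of tail sums. -/
noncomputable def tailSum (S : Type*) [CommSemiring S] (i : ι) : MvPolynomial ι S :=
  ∑ h ∈ Ici i, MvPolynomial.X h

variable [LocallyFiniteOrderBot ι] [CommRing S]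

theorem tailSum_sub_tailSum {i j : ι} (hij : i ≤ j) :
    tailSum S i - tailSum S j = ∑ k ∈ Iio j with i ≤ k, MvPolynomial.X k := by
  rw [tailSum, tailSum, ← sum_sdiff_eq_sub (Ici_subset_Ici.2 hij)]
  congr 1
  ext k
  simp [and_comm]

theorem sum_filter_tailSum_sub (j : ι) (P : ι → Prop) [DecidablePred P] :
    ∑ i ∈ Iic j with P i, (tailSum S i - tailSum S j) =
      ∑ k ∈ Iio j, #{i ∈ Iic k | P i} • MvPolynomial.X k := by
  calc
    _ = ∑ i ∈ Iic j with P i, ∑ k ∈ Iio j with i ≤ k, MvPolynomial.X k :=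
      sum_congr rfl fun i hi => tailSum_sub_tailSum (mem_Iic.1 (mem_filter.1 hi).1)
    _ = ∑ k ∈ Iio j, ∑ i ∈ Iic k with P i, MvPolynomial.X k := sum_comm' fun i k => by
      simp only [mem_filter, mem_Iic, mem_Iio]
      exact ⟨fun h => ⟨⟨h.2.2, h.1.2⟩, h.2.1⟩,
        fun h => ⟨⟨h.1.1.trans h.2.le, h.1.2⟩, h.2, h.1.1⟩⟩
    _ = _ := by simp only [sum_const]

end TailSum

section CoeffwiseOrder

variable {σ S : Type*}

/-- The coefficientwise partial order on polynomials, so that `0 ≤ p` says that all coefficients of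
`p` are nonnegative. Mathlib puts no order on `MvPolynomial`, hence this is only a local
instance. -/
abbrev coeffwisePartialOrder [CommSemiring S] [PartialOrder S] :
    PartialOrder (MvPolynomial σ S) :=
  PartialOrder.lift (fun p m => p.coeff m) fun p q h => MvPolynomial.ext p q (congrFun h)

attribute [local instance] coeffwisePartialOrder

theorem coeffwise_nonneg_iff [CommSemiring S] [PartialOrder S] {p : MvPolynomial σ S} :
    0 ≤ p ↔ ∀ m, 0 ≤ p.coeff m :=
  Iff.rfl

variable [CommRing S] [PartialOrder S] [IsOrderedRing S]

theorem coeffwise_isOrderedRing : IsOrderedRing (MvPolynomial σ S) := by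
  classical
  have : IsOrderedAddMonoid (MvPolynomial σ S) :=
    { add_le_add_left := fun p q h r m => by
        simpa only [MvPolynomial.coeff_add] using add_le_add_left (h m) (r.coeff m) }
  have : ZeroLEOneClass (MvPolynomial σ S) :=
    ⟨coeffwise_nonneg_iff.2 fun m => by
      rw [MvPolynomial.coeff_one]
      split_ifs <;> simp⟩
  refine .of_mul_nonneg fun p q hp hq => coeffwise_nonneg_iff.2 fun m => ?_
  rw [MvPolynomial.coeff_mul]
  exact sum_nonneg fun x _ => mul_nonneg (hp x.1) (hq x.2)

attribute [local instance] coeffwise_isOrderedRing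

theorem coeffwise_X_nonneg (i : σ) : 0 ≤ (MvPolynomial.X i : MvPolynomial σ S) := by
  classical
  refine coeffwise_nonneg_iff.2 fun m => ?_
  rw [MvPolynomial.coeff_X]
  split_ifs <;> simp

variable {ι : Type*} [LinearOrder ι] [LocallyFiniteOrderTop ι]

theorem tailSum_nonneg (i : ι) : 0 ≤ tailSum S i :=
  sum_nonneg fun h _ => coeffwise_X_nonneg h

theorem tailSum_antitone : Antitone (tailSum S : ι → MvPolynomial ι S) := fun _ _ hij =>
  sum_le_sum_of_subset_of_nonneg (Ici_subset_Ici.2 hij) fun h _ _ => coeffwise_X_nonneg h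

theorem sum_permMonomial_tailSum_mul_nonneg [LocallyFiniteOrderBot ι] [Fintype ι]
    {e : ι → ℕ} (he : StrictAnti e) (j : ι) :
    0 ≤ ∑ π : Perm ι, permMonomial (tailSum S) e π *
      (∑ k ∈ Ici j, MvPolynomial.X k -
        ∑ k ∈ Iio j, #{i ∈ Iic k | π j < π i} • MvPolynomial.X k) := by
  have hle := sum_permMonomial_mul_sum_filter_le (y := tailSum S) (s := Iic j) (j := j)
    tailSum_nonneg he (mem_Iic.2 le_rfl) (fun i hi => tailSum_antitone (mem_Iic.1 hi))
    fun i _ q _ => (le_total q i).imp (tailSum_antitone ·) (tailSum_antitone ·)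
  refine (sub_nonneg.2 hle).trans_eq ?_
  rw [← sum_sub_distrib]
  refine sum_congr rfl fun π _ => ?_
  rw [← sum_filter_tailSum_sub, ← tailSum, sum_sub_distrib, sum_const, nsmul_eq_mul]
  push_cast
  ring

end CoeffwiseOrder

theorem map_Fpoly (n : ℕ) (π : Perm (Fin n)) :
    MvPolynomial.map (Nat.castRingHom ℤ) (Fpoly n π) =
      permMonomial (tailSum ℤ) (fun v : Fin n => n - 1 - v) π := by
  simp only [Fpoly, permMonomial, tailSum, map_prod, map_pow, map_sum, MvPolynomial.map_X]

theorem cast_Ecoef_sub_single (n : ℕ) (π : Perm (Fin n)) (d : Fin n → ℕ) (k : Fin n) :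
    (Ecoef n π (fun l => (d l : ℤ) - if l = k then 1 else 0) : ℤ) =
      MvPolynomial.coeff (Finsupp.equivFunOnFinite.symm d)
        (permMonomial (tailSum ℤ) (fun v : Fin n => n - 1 - v) π * MvPolynomial.X k) := by
  have hsupp : (∀ i, 0 ≤ (d i : ℤ) - if i = k then 1 else 0) ↔
      k ∈ (Finsupp.equivFunOnFinite.symm d).support := by
    rw [Finsupp.mem_support_iff, Finsupp.coe_equivFunOnFinite_symm]
    constructor
    · intro h
      have := h k
      grind
    · grind
  have hexp : Finsupp.equivFunOnFinite.symm (fun l => ((d l : ℤ) - if l = k then 1 else 0).toNat) =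
      Finsupp.equivFunOnFinite.symm d - Finsupp.single k 1 := by
    ext l
    simp only [Finsupp.coe_equivFunOnFinite_symm, Finsupp.coe_tsub, Pi.sub_apply,
      Finsupp.single_apply]
    grind
  rw [← map_Fpoly, MvPolynomial.coeff_mul_X', MvPolynomial.coeff_map, Ecoef, hexp]
  simp only [hsupp, apply_ite Nat.cast, Nat.cast_zero, eq_natCast]

/-- for every degree vector `d` with `∑ d = C(n,2)+1`, the
coefficient `∑_π (∑_{k=j}^n E^π(d−e_k) − ∑_{k=1}^{j−1} E^π(d−e_k)·#{i ≤ k : π(i)>π(j)})`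
is nonnegative. -/
theorem stmt16 (n : ℕ) (hn : 2 ≤ n) (j : Fin n) (hj : 1 ≤ (j : ℕ))
    (d : Fin n → ℕ) (hd : ∑ l, d l = n.choose 2 + 1) :
    0 ≤ ∑ π : Equiv.Perm (Fin n),
        ((∑ k ∈ Finset.Ici j,
            (Ecoef n π (fun l => (d l : ℤ) - if l = k then 1 else 0) : ℤ)) -
          ∑ k ∈ Finset.Iio j,
            (Ecoef n π (fun l => (d l : ℤ) - if l = k then 1 else 0) : ℤ) *
              ((Finset.Iic k).filter (fun i => π j < π i)).card) := by
  have hanti : StrictAnti fun v : Fin n => n - 1 - (v : ℕ) := fun v w hvw => by lia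
  have hcoeff := coeffwise_nonneg_iff.1 (sum_permMonomial_tailSum_mul_nonneg (S := ℤ) hanti j)
    (Finsupp.equivFunOnFinite.symm d)
  simpa only [cast_Ecoef_sub_single, MvPolynomial.coeff_sum, MvPolynomial.coeff_sub, mul_sub,
    mul_sum, mul_smul_comm, MvPolynomial.coeff_smul, nsmul_eq_mul' (_ : ℤ)] using hcoeff
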